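/- Let p be an odd prime and n an even integer with 2 ≤ n ≤ p-2. Then the generalized Bernoulli number B_{1,ω^{n-1}} := (1/p)·∑_{a=1}^{p-1} ω^{n-1}(a)·a ∈ ℤ_p satisfies B_{1,ω^{n-1}} ≡ B_n/n (mod p), where B_n is the n-th ordinary Bernoulli number and ω is the Teichmüller character mod p. -/

import Mathlib

lemma bern_unit (p : ℕ) [Fact p.Prime] (m : ℕ) (h0 : 0 < m) (h : m < p) :
    ∃ u : ℤ_[p], u * (m : ℤ_[p]) = 1 := by
  have : IsUnit (m : ℤ_[p]) := by
    rw [PadicInt.isUnit_iff]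
    have := (PadicInt.norm_natCast_eq_one_iff (p := p) (n := m)).2
      (((Nat.Prime.coprime_iff_not_dvd Fact.out).2 (Nat.not_dvd_of_pos_of_lt h0 h)))
    exact this
  obtain ⟨u, hu⟩ := this.exists_left_inv
  exact ⟨u, hu⟩

lemma bern_int (p : ℕ) [Fact p.Prime] (k : ℕ) (hk : k + 1 < p) :
    ∃ c : ℤ_[p], (c : ℚ_[p]) = ((bernoulli k : ℚ) : ℚ_[p]) := by
  induction k using Nat.strong_induction_on with
  | _ k ih =>
    have ih' : ∀ m : Fin k, ∃ c : ℤ_[p], (c : ℚ_[p]) = ((bernoulli m : ℚ) : ℚ_[p]) :=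
      fun m => ih m m.2 (by omega)
    choose β hβ using ih'
    obtain ⟨u, hu⟩ := bern_unit p (k + 1) (by omega) hk
    have hs := sum_bernoulli (k + 1)
    rw [Finset.sum_range_succ, Finset.sum_range] at hs
    have hs2 := congrArg (fun q : ℚ => (q : ℚ_[p])) hs
    have hu2 := congrArg (fun q : ℤ_[p] => (q : ℚ_[p])) hu
    refine ⟨u * ((if k + 1 = 1 then 1 else 0) - ∑ m : Fin k, ((k + 1).choose m : ℤ_[p]) * β m), ?_⟩
    have e : (((if k + 1 = 1 then 1 else 0 : ℤ_[p])) : ℚ_[p])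
      = (((if k + 1 = 1 then 1 else 0 : ℚ)) : ℚ_[p]) := by split_ifs <;> simp
    have hc : (k + 1).choose k = k + 1 := by simp
    rw [hc] at hs2
    simp only [Rat.cast_add, Rat.cast_sum, Rat.cast_mul, Rat.cast_natCast] at hs2
    simp only [PadicInt.coe_mul, PadicInt.coe_natCast, PadicInt.coe_one] at hu2
    rw [PadicInt.coe_mul, PadicInt.coe_sub, e, PadicInt.coe_sum]
    simp only [PadicInt.coe_mul, PadicInt.coe_natCast, hβ]
    rw [← hs2]
    linear_combination ((bernoulli k : ℚ) : ℚ_[p]) * hu2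

lemma bern_faul (p : ℕ) [Fact p.Prime] (n : ℕ) (h2 : 2 ≤ n) (hn : n + 1 < p) (c : ℤ_[p])
    (hc : (c : ℚ_[p]) = ((bernoulli n : ℚ) : ℚ_[p])) :
    ∃ d : ℤ_[p], (∑ a ∈ Finset.range p, (a : ℤ_[p]) ^ n) = p * c + p ^ 2 * d := by
  have ih' : ∀ m : Fin n, ∃ c : ℤ_[p], (c : ℚ_[p]) = ((bernoulli m : ℚ) : ℚ_[p]) :=
    fun m => bern_int p m (by omega)
  choose β hβ using ih'
  obtain ⟨u, hu⟩ := bern_unit p (n + 1) (by omega) hn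
  have hs2 := congrArg (fun q : ℚ => (q : ℚ_[p])) (sum_range_pow p n)
  have hu2 := congrArg (fun q : ℤ_[p] => (q : ℚ_[p])) hu
  refine ⟨u * ∑ m : Fin n, β m * ((n + 1).choose m : ℤ_[p]) * p ^ (n - 1 - m), ?_⟩
  apply PadicInt.ext
  have hne : (n : ℚ_[p]) + 1 ≠ 0 := by exact_mod_cast Nat.succ_ne_zero n
  rw [Finset.sum_range_succ, Finset.sum_range (n := n)] at hs2
  have hcc : (n + 1).choose n = n + 1 := by simp
  rw [hcc] at hs2
  simp only [PadicInt.coe_mul, PadicInt.coe_natCast, PadicInt.coe_one] at hu2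
  push_cast at hs2 hu2 ⊢
  simp only [PadicInt.coe_sum, PadicInt.coe_mul, PadicInt.coe_pow, PadicInt.coe_natCast, hβ, hc]
  rw [hs2]
  have e : ∀ m : Fin n, ((bernoulli m : ℚ) : ℚ_[p]) * ((n + 1).choose m : ℚ_[p]) * (p : ℚ_[p]) ^ (n + 1 - (m : ℕ)) / (n + 1)
      = p ^ 2 * ((u : ℚ_[p]) * (((bernoulli m : ℚ) : ℚ_[p]) * ((n + 1).choose m : ℚ_[p]) * (p : ℚ_[p]) ^ (n - 1 - (m : ℕ)))) := by
    intro m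
    have : n + 1 - (m : ℕ) = (n - 1 - m) + 2 := by omega
    rw [this, pow_add, div_eq_iff hne]
    linear_combination (-((bernoulli m : ℚ) : ℚ_[p]) * ((n + 1).choose m : ℚ_[p]) * (p : ℚ_[p]) ^ (n - 1 - (m : ℕ)) * p ^ 2) * hu2
  rw [Finset.sum_congr rfl (fun m _ => e m), Finset.mul_sum, Finset.mul_sum, add_comm]
  congr 1
  have : n + 1 - n = 1 := by omega
  rw [this]
  field_simp

lemma bern_pt {R : Type*} [CommRing R] (a t q : R) (k : ℕ) :
    ∃ d : R, ((k : R) + 1) * ((a + q * t) ^ k * a) =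
      a ^ (k + 1) + k * (a + q * t) ^ (k + 1) + q ^ 2 * d := by
  -- with `w = a + q t`
  obtain ⟨r, hr⟩ := Polynomial.powAddExpansion (a + q * t) (-(q * t)) (k + 1)
  refine ⟨-r * t ^ 2, ?_⟩
  have h1 : a + q * t + -(q * t) = a := by ring
  rw [h1] at hr
  rw [hr]
  push_cast
  ring


/-- `B_{1,ω^{n-1}} = (1/p)∑_{a=1}^{p-1} ω^{n-1}(a)·a` lies in `ℤ_p`
and is congruent to `B_n/n` modulo `p`, for `n` even with `2 ≤ n ≤ p-2`. -/
theorem generalized_bernoulli_congruence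
    (p : ℕ) [Fact p.Prime] (hodd : Odd p)
    (n : ℕ) (hn : Even n) (h2 : 2 ≤ n) (hn2 : n ≤ p - 2)
    (ω : (ZMod p)ˣ →* ℤ_[p]ˣ)
    (hω1 : ∀ s, PadicInt.toZMod ((ω s : ℤ_[p])) = (s : ZMod p))
    (hω2 : ∀ s, (ω s) ^ (p - 1) = 1) :
    ∃ b c : ℤ_[p],
      (b : ℚ_[p]) = (p : ℚ_[p])⁻¹ *
          ∑ s : (ZMod p)ˣ, (((ω s : ℤ_[p]) ^ (n - 1) : ℤ_[p]) : ℚ_[p])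
            * (((s : ZMod p).val : ℕ) : ℚ_[p])
      ∧ (c : ℚ_[p]) = ((bernoulli n / n : ℚ) : ℚ_[p])
      ∧ ∃ d : ℤ_[p], b - c = (p : ℤ_[p]) * d := by

  have hp : p.Prime := Fact.out
  have hnp : n + 1 < p := by have := hp.two_le; omega
  obtain ⟨k, rfl⟩ : ∃ k, n = k + 1 := ⟨n - 1, by omega⟩
  obtain ⟨β, hβ⟩ := bern_int p (k + 1) hnp
  obtain ⟨d1, hd1⟩ := bern_faul p (k + 1) h2 hnp β hβ
  obtain ⟨u, hu⟩ := bern_unit p (k + 1) (by omega) (by omega)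
  have hu2 := congrArg (fun q : ℤ_[p] => (q : ℚ_[p])) hu
  have hpt : ∀ s : (ZMod p)ˣ, ∃ d : ℤ_[p],
      ((k : ℤ_[p]) + 1) * ((ω s : ℤ_[p]) ^ k * ((s : ZMod p).val : ℤ_[p])) =
      ((s : ZMod p).val : ℤ_[p]) ^ (k + 1) + k * (ω s : ℤ_[p]) ^ (k + 1) + (p : ℤ_[p]) ^ 2 * d := by
    intro s
    have h : (ω s : ℤ_[p]) - ((s : ZMod p).val : ℤ_[p]) ∈ RingHom.ker (PadicInt.toZMod (p := p)) := by
      rw [RingHom.mem_ker, map_sub, hω1, map_natCast, ZMod.natCast_zmod_val, sub_self]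
    rw [PadicInt.ker_toZMod, PadicInt.maximalIdeal_eq_span_p, Ideal.mem_span_singleton] at h
    obtain ⟨t, ht⟩ := h
    have : (ω s : ℤ_[p]) = ((s : ZMod p).val : ℤ_[p]) + p * t := by rw [← ht]; ring
    rw [this]
    exact bern_pt _ _ _ _
  choose D hD using hpt
  have hchar : ∑ s : (ZMod p)ˣ, (ω s : ℤ_[p]) ^ (k + 1) = 0 := by
    have := sum_hom_units_eq_zero ((Units.coeHom ℤ_[p]).comp (ω ^ (k + 1))) (by
      intro h
      have h3 : ∀ s : (ZMod p)ˣ, s ^ (k + 1) = 1 := by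
        intro s
        have h4 := congrArg (PadicInt.toZMod (p := p)) (DFunLike.congr_fun h s)
        simp [hω1] at h4
        exact Units.ext (by simpa using h4)
      have h5 := (FiniteField.forall_pow_eq_one_iff (ZMod p) (k + 1)).1 h3
      rw [ZMod.card] at h5
      have := Nat.le_of_dvd (by omega) h5
      omega)
    simpa using this
  have hsum : ∑ s : (ZMod p)ˣ, ((s : ZMod p).val : ℤ_[p]) ^ (k + 1)
      = ∑ a ∈ Finset.range p, (a : ℤ_[p]) ^ (k + 1) := by
    have e1 : ∑ a ∈ Finset.range p, (a : ℤ_[p]) ^ (k + 1)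
        = ∑ a ∈ (Finset.range p).erase 0, (a : ℤ_[p]) ^ (k + 1) := by
      rw [← Finset.add_sum_erase (Finset.range p) _ (Finset.mem_range.2 hp.pos)]
      simp
    rw [e1]
    refine Finset.sum_bij (fun s _ => (s : ZMod p).val) ?_ ?_ ?_ ?_
    · intro s _
      simp [ZMod.val_lt]
    · intro s _ t _ h
      exact Units.ext (ZMod.val_injective p h)
    · intro b hb
      simp only [Finset.mem_erase, Finset.mem_range] at hb
      have hb0 : (b : ZMod p) ≠ 0 := by
        rw [Ne, ZMod.natCast_eq_zero_iff]
        exact Nat.not_dvd_of_pos_of_lt (by omega) hb.2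
      exact ⟨Units.mk0 _ hb0, Finset.mem_univ _, by simp [ZMod.val_natCast, Nat.mod_eq_of_lt hb.2]⟩
    · intro s _
      rfl
  have hT := Finset.sum_congr (rfl : (Finset.univ : Finset (ZMod p)ˣ) = _) (fun s _ => hD s)
  rw [← Finset.mul_sum, Finset.sum_add_distrib, Finset.sum_add_distrib, ← Finset.mul_sum,
    ← Finset.mul_sum, hchar, hsum, hd1] at hT
  have hpne : (p : ℚ_[p]) ≠ 0 := by exact_mod_cast hp.ne_zero
  have hT2 : ∑ s : (ZMod p)ˣ, (ω s : ℤ_[p]) ^ k * ((s : ZMod p).val : ℤ_[p])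
      = p * (u * β + p * (u * (d1 + ∑ s, D s))) := by
    push_cast at hu
    linear_combination u * hT - (∑ s : (ZMod p)ˣ, (ω s : ℤ_[p]) ^ k * ((s : ZMod p).val : ℤ_[p])) * hu
  refine ⟨u * β + p * (u * (d1 + ∑ s, D s)), u * β, ?_, ?_, u * (d1 + ∑ s, D s), by ring⟩
  · have hT3 := congrArg (fun q : ℤ_[p] => (q : ℚ_[p])) hT2
    simp only [PadicInt.coe_sum, PadicInt.coe_mul, PadicInt.coe_natCast] at hT3
    rw [Nat.add_sub_cancel, eq_inv_mul_iff_mul_eq₀ hpne]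
    rw [hT3]
  · have hne : ((k + 1 : ℕ) : ℚ_[p]) ≠ 0 := by exact_mod_cast Nat.succ_ne_zero k
    simp only [PadicInt.coe_mul, PadicInt.coe_natCast, PadicInt.coe_one] at hu2
    rw [PadicInt.coe_mul, hβ, Rat.cast_div, Rat.cast_natCast, eq_div_iff hne]
    linear_combination ((bernoulli (k + 1) : ℚ) : ℚ_[p]) * hu2
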